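/- Let P be a probability distribution over variables (X_v)_{v∈V} that is Markovian to a maximal DAG G_0, is converse pairwise Markovian to G_0, and satisfies ordered upward- and downward-stability w.r.t. G_0. If, in addition, P is V-stable, then every DAG output G(P) of a natural constraint-based structure-learning algorithm is Markov equivalent to G_0. -/

import Mathlib

open MeasureTheory ProbabilityTheory

/-! ## Mixed graphs, m-separation, and related graphical notions -/

/-- A mixed graph with arrows (`i → j`) and bidirected arcs (`i ↔ j`). -/
structure MixedGraph (V : Type) where
  arrow : V → V → Prop
  arc : V → V → Prop

namespace MixedGraph

variable {V : Type} (G : MixedGraph V)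

/-- `G.anc i j` : `i` is an ancestor of `j`, i.e. there is a directed path from `i` to `j`. -/
def anc (i j : V) : Prop := Relation.TransGen G.arrow i j

/-- Adjacency: there is some edge between `i` and `j`. -/
def adj (i j : V) : Prop := G.arrow i j ∨ G.arrow j i ∨ G.arc i j

/-- A directed ancestral graph: a simple mixed graph with arrows and arcs, no directed
cycle, and no arc one of whose endpoints is an ancestor of the other. -/
def IsDirectedAncestral : Prop :=
  (∀ i j, G.arc i j ↔ G.arc j i) ∧
  (∀ i, ¬ G.arc i i) ∧
  (∀ i j, ¬ (G.arrow i j ∧ G.arrow j i)) ∧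
  (∀ i j, ¬ (G.arrow i j ∧ G.arc i j)) ∧
  (∀ i, ¬ G.anc i i) ∧
  (∀ i j, G.arc i j → ¬ G.anc i j ∧ ¬ G.anc j i)

/-- A DAG: only arrows, and no directed cycle. -/
def IsDAG : Prop := (∀ i j, ¬ G.arc i j) ∧ (∀ i, ¬ G.anc i i)

/-- There is an edge between `i` and `j` with an arrowhead at `j`. -/
def headInto (i j : V) : Prop := G.arrow i j ∨ G.arc i j

/-- The inner node `b` of a tripath `⟨a,b,c⟩` is a collider. -/
def collider (a b c : V) : Prop := G.headInto a b ∧ G.headInto c b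

/-- The list of nodes `p` is a path which is connecting given `C` : consecutive nodes are
adjacent, no node is repeated, every collider inner node is in `C` or an ancestor of a node
in `C`, and every non-collider inner node is not in `C`. -/
def Connecting (C : Set V) (p : List V) : Prop :=
  p.Nodup ∧ p.Chain' G.adj ∧
  ∀ t, 0 < t → ∀ (h1 : t - 1 < p.length) (h2 : t < p.length) (h3 : t + 1 < p.length),
    (G.collider (p.get ⟨t-1, h1⟩) (p.get ⟨t, h2⟩) (p.get ⟨t+1, h3⟩) →
      p.get ⟨t, h2⟩ ∈ C ∨ ∃ c ∈ C, G.anc (p.get ⟨t, h2⟩) c) ∧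
    (¬ G.collider (p.get ⟨t-1, h1⟩) (p.get ⟨t, h2⟩) (p.get ⟨t+1, h3⟩) →
      p.get ⟨t, h2⟩ ∉ C)

/-- m-separation : `A ⊥ B | C` in `G` iff there is no connecting path between `A` and `B`
given `C`. -/
def mSep (A B C : Set V) : Prop :=
  ¬ ∃ p : List V, G.Connecting C p ∧
      (∃ a ∈ A, p.head? = some a) ∧ (∃ b ∈ B, p.getLast? = some b)

/-- Two graphs are Markov equivalent if they induce the same independence model by
m-separation. -/
def MarkovEquiv (H : MixedGraph V) : Prop :=
  ∀ A B C : Set V, Disjoint A B → Disjoint A C → Disjoint B C →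
    (G.mSep A B C ↔ H.mSep A B C)

/-- `G` is maximal: every pair of non-adjacent nodes is separated given some set. -/
def Maximal : Prop :=
  ∀ i j : V, i ≠ j → ¬ G.adj i j → ∃ C : Set V, i ∉ C ∧ j ∉ C ∧ G.mSep {i} {j} C

/-- `an(i,j) = (an(i) ∪ an(j)) \ {i,j}`. -/
def anSet (i j : V) : Set V :=
  {k | (G.anc k i ∨ G.anc k j) ∧ k ≠ i ∧ k ≠ j}

/-- The strict form of the minimal order of `G` : `a < b` iff `b` is an ancestor of `a`. -/
def minLt (a b : V) : Prop := G.anc b a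

end MixedGraph

/-! ## Abstract (singleton) independence relations and stability conditions -/

section IndependenceRelations

variable {V : Type}

/-- Ordered upward-stability of a singleton independence relation `ci` w.r.t. the strict
partial order `lt`. -/
def UpStab (lt : V → V → Prop) (ci : V → V → Set V → Prop) : Prop :=
  ∀ i j (C : Set V), i ≠ j → i ∉ C → j ∉ C → ci i j C →
    ∀ k, k ≠ i → k ≠ j → (lt i k ∨ lt j k) → ci i j (C ∪ {k})

/-- Ordered downward-stability of a singleton independence relation `ci` w.r.t. the strict
partial order `lt`. -/
def DownStab (lt : V → V → Prop) (ci : V → V → Set V → Prop) : Prop :=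
  ∀ i j (C : Set V), i ≠ j → i ∉ C → j ∉ C → ci i j C →
    ∀ k, ¬ lt i k → ¬ lt j k → (∀ l ∈ C \ {k}, ¬ lt l k) → ci i j (C \ {k})

/-- The skeleton of an independence relation: `i` and `j` are adjacent iff there is no `C`
with `⟨i,j|C⟩` an independence. -/
def skP (ci : V → V → Set V → Prop) (i j : V) : Prop :=
  i ≠ j ∧ ¬ ∃ C : Set V, i ∉ C ∧ j ∉ C ∧ ci i j C

/-- An output of a natural constraint-based structure-learning algorithm: a graph `H` whose
skeleton is the skeleton of the independence relation `ci`, obtained by directing the edges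
of that skeleton according to a `P`-compatible partial order (given here by its strict form
`lt`, required to coincide with the minimal order of `H`), w.r.t. which ordered upward- and
downward-stability hold. -/
def NaturalOutput (ci : V → V → Set V → Prop) (H : MixedGraph V) : Prop :=
  (∀ i j, H.adj i j ↔ skP ci i j) ∧
  ∃ lt : V → V → Prop, Irreflexive lt ∧ Transitive lt ∧
    (∀ i j, H.arrow i j ↔ (skP ci i j ∧ lt j i)) ∧
    (∀ i j, H.arc i j ↔ (skP ci i j ∧ ¬ lt i j ∧ ¬ lt j i)) ∧
    (∀ a b, lt a b ↔ H.minLt a b) ∧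
    UpStab lt ci ∧ DownStab lt ci

/-- Singleton-transitivity. -/
def SingletonTransitive (ci : V → V → Set V → Prop) : Prop :=
  ∀ i j k (C : Set V), i ≠ j → i ≠ k → j ≠ k → i ∉ C → j ∉ C → k ∉ C →
    ci i j C → ci i j (C ∪ {k}) → ci i k C ∨ ci j k C

/-- `ci` is V-unstable : there is a V-configuration `⟨i,k,j⟩` in the skeleton of `ci` and a
set `C` disjoint from `{i,j,k}` with `⟨i,j|C⟩` and `⟨i,j|C∪{k}⟩` independencies. -/
def VUnstable (ci : V → V → Set V → Prop) : Prop :=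
  ∃ i k j : V, ∃ C : Set V, i ≠ j ∧ i ≠ k ∧ j ≠ k ∧
    skP ci i k ∧ skP ci k j ∧ ¬ skP ci i j ∧
    i ∉ C ∧ j ∉ C ∧ k ∉ C ∧ ci i j C ∧ ci i j (C ∪ {k})

def VStable (ci : V → V → Set V → Prop) : Prop := ¬ VUnstable ci

/-- `ci` is path-unstable : there is a path `⟨i, i₁, …, i_r, k, j⟩` in the skeleton of `ci`
with `i,j` non-adjacent and every `i_n` adjacent to `j`, and a set `C` disjoint from
`{i,j,k}`, such that `⟨i,j | U∪C⟩` and `⟨i,j | U∪C∪{k}⟩` are independencies, where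
`U = {i₁,…,i_r}`. -/
def PathUnstable (ci : V → V → Set V → Prop) : Prop :=
  ∃ (i k j : V) (is : List V) (C : Set V),
    (i :: (is ++ [k, j])).Nodup ∧
    (i :: (is ++ [k, j])).Chain' (skP ci) ∧
    ¬ skP ci i j ∧
    (∀ m ∈ is, skP ci m j) ∧
    i ∉ C ∧ j ∉ C ∧ k ∉ C ∧
    ci i j ({m | m ∈ is} ∪ C) ∧ ci i j (({m | m ∈ is} ∪ C) ∪ {k})

def PathStable (ci : V → V → Set V → Prop) : Prop := ¬ PathUnstable ci

/-- The uniqueness property: all maximal directed ancestral graphs with the skeleton of `ci`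
w.r.t. (the minimal order of) which `ci` satisfies ordered upward- and downward-stability
are Markov equivalent. -/
def UniquenessProp (ci : V → V → Set V → Prop) : Prop :=
  ∀ H1 H2 : MixedGraph V,
    H1.IsDirectedAncestral → H1.Maximal → (∀ i j, H1.adj i j ↔ skP ci i j) →
      UpStab H1.minLt ci → DownStab H1.minLt ci →
    H2.IsDirectedAncestral → H2.Maximal → (∀ i j, H2.adj i j ↔ skP ci i j) →
      UpStab H2.minLt ci → DownStab H2.minLt ci →
    H1.MarkovEquiv H2

/-- The DAG-uniqueness property: all DAGs with the skeleton of `ci` w.r.t. which `ci`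
satisfies ordered upward- and downward-stability are Markov equivalent. -/
def DAGUniquenessProp (ci : V → V → Set V → Prop) : Prop :=
  ∀ H1 H2 : MixedGraph V,
    H1.IsDAG → (∀ i j, H1.adj i j ↔ skP ci i j) →
      UpStab H1.minLt ci → DownStab H1.minLt ci →
    H2.IsDAG → (∀ i j, H2.adj i j ↔ skP ci i j) →
      UpStab H2.minLt ci → DownStab H2.minLt ci →
    H1.MarkovEquiv H2

end IndependenceRelations

/-! ## Probabilistic conditional independence of collections of variables -/

section Probabilistic

variable {V : Type} {Ω : Type} [MeasurableSpace Ω]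
  {𝓧 : V → Type}

/-- The tuple of variables `X_A`. -/
def restrictVars (X : ∀ v, Ω → 𝓧 v) (A : Set V) : Ω → ∀ a : A, 𝓧 a :=
  fun ω a => X a ω

variable [StandardBorelSpace Ω] [Nonempty Ω] [∀ v, MeasurableSpace (𝓧 v)]

theorem measurable_restrictVars {X : ∀ v, Ω → 𝓧 v} (hX : ∀ v, Measurable (X v))
    (A : Set V) : Measurable (restrictVars X A) :=
  measurable_pi_lambda _ fun a => hX a

/-- `⟨A,B|C⟩ ∈ J(P)` : the tuple `X_A` is conditionally independent of `X_B` given `X_C`. -/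
def CI (μ : Measure Ω) [IsFiniteMeasure μ] (X : ∀ v, Ω → 𝓧 v)
    (hX : ∀ v, Measurable (X v)) (A B C : Set V) : Prop :=
  CondIndepFun (MeasurableSpace.comap (restrictVars X C) MeasurableSpace.pi)
    (Measurable.comap_le (measurable_restrictVars hX C))
    (restrictVars X A) (restrictVars X B) μ

/-- Singleton conditional independence `i ⫫ j | C`. -/
def ciP (μ : Measure Ω) [IsFiniteMeasure μ] (X : ∀ v, Ω → 𝓧 v)
    (hX : ∀ v, Measurable (X v)) (i j : V) (C : Set V) : Prop :=
  CI μ X hX {i} {j} C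

/-- `P` is Markovian to `G` : `J(G) ⊆ J(P)`. -/
def Markovian (μ : Measure Ω) [IsFiniteMeasure μ] (X : ∀ v, Ω → 𝓧 v)
    (hX : ∀ v, Measurable (X v)) (G : MixedGraph V) : Prop :=
  ∀ A B C : Set V, Disjoint A B → Disjoint A C → Disjoint B C →
    G.mSep A B C → CI μ X hX A B C

/-- `P` and `G` are faithful : `J(G) = J(P)`. -/
def Faithful (μ : Measure Ω) [IsFiniteMeasure μ] (X : ∀ v, Ω → 𝓧 v)
    (hX : ∀ v, Measurable (X v)) (G : MixedGraph V) : Prop :=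
  ∀ A B C : Set V, Disjoint A B → Disjoint A C → Disjoint B C →
    (G.mSep A B C ↔ CI μ X hX A B C)

/-- `P` is converse pairwise Markovian to `G`. -/
def ConvPairwiseMarkov (μ : Measure Ω) [IsFiniteMeasure μ] (X : ∀ v, Ω → 𝓧 v)
    (hX : ∀ v, Measurable (X v)) (G : MixedGraph V) : Prop :=
  ∀ i j : V, i ≠ j → ciP μ X hX i j (G.anSet i j) → ¬ G.adj i j

end Probabilistic

/-!
d-separation in a DAG is ordinary separation in the moral graph of the ancestral closure of the
nodes involved (Lauritzen). Hence DAGs with the same skeleton and the same unshielded colliders are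
Markov equivalent (Verma–Pearl, Frydenberg): a geodesic of one moral graph is also a walk in the
other. It remains to read the pattern off `P`. By ordered stability, any two separable nodes are
separated by their common ancestral set `an(i, j)`, so the skeleton of the DAG is that of `P`; and
by V-stability, an unshielded `i — k — j` is a collider exactly if some set without `k` separates
`i` and `j`.
-/

theorem exists_walk_forall_mem_support_exists_not_adj {V : Type*} {M : SimpleGraph V} {a b : V}
    (h : M.Reachable a b) :
    ∃ p : M.Walk a b, ∀ v ∈ p.support, v = a ∨ v = b ∨
      ∃ u ∈ p.support, ∃ w ∈ p.support, M.Adj u v ∧ M.Adj v w ∧ u ≠ w ∧ ¬ M.Adj u w := by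
  obtain ⟨p, hp⟩ := h.exists_walk_length_eq_dist
  refine ⟨p, fun v hv => ?_⟩
  obtain ⟨n, rfl, hn⟩ := SimpleGraph.Walk.mem_support_iff_exists_getVert.1 hv
  obtain rfl | hn₀ := Nat.eq_zero_or_pos n
  · exact .inl p.getVert_zero
  obtain rfl | hn := hn.eq_or_lt
  · exact .inr (.inl p.getVert_length)
  obtain ⟨m, rfl⟩ := Nat.exists_eq_add_one_of_ne_zero hn₀.ne'
  have hdist : M.dist (p.getVert m) (p.getVert (m + 2)) = 2 := by
    have := SimpleGraph.length_eq_dist_of_subwalk hp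
      (((p.drop m).isSubwalk_take 2).trans (p.isSubwalk_drop m))
    simp only [SimpleGraph.Walk.take_length, SimpleGraph.Walk.drop_length,
      SimpleGraph.Walk.drop_getVert] at this
    rw [← this]
    omega
  refine .inr (.inr ⟨_, p.getVert_mem_support m, _, p.getVert_mem_support (m + 2),
    p.adj_getVert_succ (by omega), p.adj_getVert_succ hn, fun h => ?_, fun h => ?_⟩)
  · simp [h] at hdist
  · simp [SimpleGraph.dist_eq_one_iff_adj.2 h] at hdist

namespace MixedGraph

variable {V : Type} {G H : MixedGraph V} {A B C D : Set V} {a b i j u v w : V}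

section DAG

theorem IsDAG.adj_iff (hG : G.IsDAG) : G.adj i j ↔ G.arrow i j ∨ G.arrow j i := by
  simp only [adj, hG.1 i j, or_false]

theorem IsDAG.collider_iff (hG : G.IsDAG) : G.collider u v w ↔ G.arrow u v ∧ G.arrow w v := by
  simp only [collider, headInto, hG.1 u v, hG.1 w v, or_false]

theorem IsDAG.not_arrow_self (hG : G.IsDAG) : ¬ G.arrow v v :=
  fun h => hG.2 v (.single h)

theorem IsDAG.not_arrow_symm (hG : G.IsDAG) (h : G.arrow u v) : ¬ G.arrow v u :=
  fun h' => hG.2 u (.tail (.single h) h')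

theorem IsDAG.wellFounded_minLt [Finite V] (hG : G.IsDAG) : WellFounded G.minLt :=
  have : IsTrans V G.minLt := ⟨fun _ _ _ h₁ h₂ => Relation.TransGen.trans h₂ h₁⟩
  have : Std.Irrefl G.minLt := ⟨hG.2⟩
  Finite.wellFounded_of_trans_of_irrefl G.minLt

end DAG

section AncestralClosure

/-- The smallest ancestral set containing `D`: the nodes of `D` and all their ancestors. -/
def ancestralClosure (G : MixedGraph V) (D : Set V) : Set V :=
  {v | ∃ d ∈ D, Relation.ReflTransGen G.arrow v d}

theorem subset_ancestralClosure : D ⊆ G.ancestralClosure D :=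
  fun d hd => ⟨d, hd, .refl⟩

theorem ancestralClosure_mono (h : C ⊆ D) : G.ancestralClosure C ⊆ G.ancestralClosure D :=
  fun _ ⟨d, hd, hvd⟩ => ⟨d, h hd, hvd⟩

theorem mem_ancestralClosure_of_reflTransGen (hvw : Relation.ReflTransGen G.arrow v w)
    (hw : w ∈ G.ancestralClosure D) : v ∈ G.ancestralClosure D :=
  let ⟨d, hd, hwd⟩ := hw
  ⟨d, hd, hvw.trans hwd⟩

theorem mem_ancestralClosure_of_arrow (hvw : G.arrow v w) (hw : w ∈ G.ancestralClosure D) :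
    v ∈ G.ancestralClosure D :=
  mem_ancestralClosure_of_reflTransGen (.single hvw) hw

theorem mem_ancestralClosure_iff_mem_or_anc :
    v ∈ G.ancestralClosure C ↔ v ∈ C ∨ ∃ c ∈ C, G.anc v c := by
  constructor
  · rintro ⟨c, hc, hvc⟩
    rcases Relation.reflTransGen_iff_eq_or_transGen.1 hvc with rfl | hvc
    exacts [.inl hc, .inr ⟨c, hc, hvc⟩]
  · rintro (hv | ⟨c, hc, hvc⟩)
    exacts [subset_ancestralClosure hv, ⟨c, hc, hvc.to_reflTransGen⟩]

end AncestralClosure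

section Connecting

theorem connecting_singleton : G.Connecting C [v] :=
  ⟨List.nodup_singleton v, List.isChain_singleton v, fun t ht _ h => by
    simp only [List.length_singleton] at h; omega⟩

theorem IsDAG.connecting_cons_cons_iff (hG : G.IsDAG) {p : List V} :
    G.Connecting C (w :: v :: p) ↔
      w ∉ v :: p ∧ (G.arrow w v ∨ G.arrow v w) ∧
      (∀ u ∈ p.head?, (G.arrow w v ∧ G.arrow u v → v ∈ G.ancestralClosure C) ∧
        (¬ (G.arrow w v ∧ G.arrow u v) → v ∉ C)) ∧
      G.Connecting C (v :: p) := by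
  simp only [Connecting, List.nodup_cons (a := w), hG.collider_iff,
    ← mem_ancestralClosure_iff_mem_or_anc]
  constructor
  · rintro ⟨⟨hw, hp⟩, hchain, hinner⟩
    obtain ⟨hwv, hchain⟩ := List.isChain_cons_cons.1 hchain
    refine ⟨hw, hG.adj_iff.1 hwv, fun u hu => ?_, hp, hchain, fun t ht h₁ h₂ h₃ => ?_⟩
    · cases p with
      | nil => simp at hu
      | cons x p =>
        obtain rfl : x = u := by simpa using hu
        exact hinner 1 one_pos (by simp) (by simp) (by simp)
    · obtain ⟨t, rfl⟩ := Nat.exists_eq_succ_of_ne_zero ht.ne'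
      exact hinner (t + 2) (by omega) (by simp at h₁ ⊢; omega) (by simp at h₂ ⊢; omega)
        (by simp at h₃ ⊢; omega)
  · rintro ⟨hw, hwv, hhead, hp, hchain, hinner⟩
    refine ⟨⟨hw, hp⟩, List.isChain_cons_cons.2 ⟨hG.adj_iff.2 hwv, hchain⟩, fun t ht h₁ h₂ h₃ => ?_⟩
    match t with
    | 1 =>
      cases p with
      | nil => simp at h₃
      | cons x p => exact hhead x rfl
    | t + 2 =>
      exact hinner (t + 1) (by omega) (by simp at h₁ ⊢; omega) (by simp at h₂ ⊢; omega)
        (by simp at h₃ ⊢; omega)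

end Connecting

section Trail

/-- `G.Ascendable C v s` says that a path whose last edge `u — v` points into `v` (`s = true`) or
not (`s = false`) stays connecting given `C` when it is continued by an edge `w → v`. -/
def Ascendable (G : MixedGraph V) (C : Set V) (v : V) : Bool → Prop
  | false => v ∉ C
  | true => v ∈ G.ancestralClosure C

/-- `G.Trail B C v s p` says that `v :: p`, read backwards, is a path from `B` to `v` which is
connecting given `C`; the Boolean `s` records whether its last edge points into `v`. -/
inductive Trail (G : MixedGraph V) (B C : Set V) : V → Bool → List V → Prop
  | start {b : V} (hb : b ∈ B) : Trail G B C b false []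
  | down {v w : V} {s : Bool} {p : List V} (hp : Trail G B C v s p) (hv : v ∉ C)
      (hvw : G.arrow v w) (hw : w ∉ v :: p) : Trail G B C w true (v :: p)
  | up {v w : V} {s : Bool} {p : List V} (hp : Trail G B C v s p) (hv : G.Ascendable C v s)
      (hwv : G.arrow w v) (hw : w ∉ v :: p) : Trail G B C w false (v :: p)

variable {s : Bool} {p : List V}

theorem Trail.exists_getLast? (hp : G.Trail B C v s p) : ∃ b ∈ B, (v :: p).getLast? = some b := by
  induction hp with
  | start hb => exact ⟨_, hb, rfl⟩
  | down _ _ _ _ ih | up _ _ _ _ ih => simpa only [List.getLast?_cons_cons] using ih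

theorem IsDAG.trail_eq_true_iff (hG : G.IsDAG) (hp : G.Trail B C v s p) (hu : u ∈ p.head?) :
    s = true ↔ G.arrow u v := by
  cases hp with
  | start => simp at hu
  | down _ _ huv => cases hu; simp [huv]
  | up _ _ hvu => cases hu; simp [hG.not_arrow_symm hvu]

theorem IsDAG.connecting_of_trail (hG : G.IsDAG) (hp : G.Trail B C v s p) :
    G.Connecting C (v :: p) := by
  induction hp with
  | start => exact connecting_singleton
  | down _ hv hvw hw ih =>
    exact hG.connecting_cons_cons_iff.2 ⟨hw, .inr hvw,
      fun _ _ => ⟨fun h => (hG.not_arrow_symm hvw h.1).elim, fun _ => hv⟩, ih⟩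
  | @up v w s p hp hv hwv hw ih =>
    refine hG.connecting_cons_cons_iff.2 ⟨hw, .inl hwv, fun u hu => ?_, ih⟩
    have hs := hG.trail_eq_true_iff hp hu
    cases s with
    | false => exact ⟨fun h => absurd (hs.2 h.2) Bool.false_ne_true, fun _ => hv⟩
    | true => exact ⟨fun _ => hv, fun h => (h ⟨hwv, hs.1 rfl⟩).elim⟩

theorem IsDAG.exists_trail_of_connecting (hG : G.IsDAG) (hBC : Disjoint B C) (hb : b ∈ B) :
    ∀ {v : V} {p : List V}, G.Connecting C (v :: p) → (v :: p).getLast? = some b →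
      ∃ s, G.Trail B C v s p
  | v, [], _, hlast => by
    obtain rfl : v = b := by simpa using hlast
    exact ⟨false, .start hb⟩
  | w, v :: p, hp, hlast => by
    obtain ⟨hw, hwv, hinner, hp⟩ := hG.connecting_cons_cons_iff.1 hp
    obtain ⟨s, htrail⟩ := hG.exists_trail_of_connecting hBC hb hp
      (by simpa only [List.getLast?_cons_cons] using hlast)
    have hvC : ¬ G.arrow w v ∨ s = false → v ∉ C := by
      intro h
      cases htrail with
      | start hvB => exact hBC.notMem_of_mem_left hvB
      | down _ _ huv => exact (hinner _ rfl).2 fun hcol => h.elim (· hcol.1) (by simp)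
      | up _ _ hvu => exact (hinner _ rfl).2 fun hcol => hG.not_arrow_symm hvu hcol.2
    rcases hwv with hwv | hvw
    · refine ⟨false, htrail.up ?_ hwv hw⟩
      cases htrail with
      | start | up => exact hvC (.inr rfl)
      | down _ _ huv => exact (hinner _ rfl).1 ⟨hwv, huv⟩
    · exact ⟨true, htrail.down (hvC (.inl (hG.not_arrow_symm hvw))) hvw hw⟩

/-- If a connecting path to `v` is to be continued by an edge back to one of its nodes `w`, its
initial segment up to `w` can take its place: either that segment can be ascended, or `w` is a
proper ancestor of `v`, which excludes `v → w` and makes `w` an ancestor of `C` whenever `v` is. -/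
theorem Trail.exists_trail_of_mem (hp : G.Trail B C v s p) (hw : w ∈ p) :
    ∃ s' q, G.Trail B C w s' q ∧
      (G.Ascendable C w s' ∨ w ∉ C ∧ s = true ∧ Relation.TransGen G.arrow w v) := by
  induction hp with
  | start => simp at hw
  | down hp hv hvx _ ih =>
    rcases List.mem_cons.1 hw with rfl | hw
    · exact ⟨_, _, hp, .inr ⟨hv, rfl, .single hvx⟩⟩
    · obtain ⟨s', q, hq, hwq⟩ := ih hw
      exact ⟨s', q, hq, hwq.imp_right fun ⟨hwC, _, hwv⟩ => ⟨hwC, rfl, hwv.tail hvx⟩⟩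
  | up hp hv _ _ ih =>
    rcases List.mem_cons.1 hw with rfl | hw
    · exact ⟨_, _, hp, .inl hv⟩
    · obtain ⟨s', q, hq, hwq⟩ := ih hw
      refine ⟨s', q, hq, .inl (hwq.elim id ?_)⟩
      rintro ⟨hwC, rfl, hwv⟩
      cases s' with
      | false => exact hwC
      | true => exact mem_ancestralClosure_of_reflTransGen hwv.to_reflTransGen hv

/-- `G.Reaches B C v` says that some path from `B` to `v` is connecting given `C`. -/
def Reaches (G : MixedGraph V) (B C : Set V) (v : V) : Prop :=
  ∃ s p, G.Trail B C v s p

/-- `G.Ascends B C v` says that some path from `B` to `v` is connecting given `C` and can be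
continued against the arrows into `v`. -/
def Ascends (G : MixedGraph V) (B C : Set V) (v : V) : Prop :=
  ∃ s p, G.Trail B C v s p ∧ G.Ascendable C v s

theorem Ascends.reaches (hv : G.Ascends B C v) : G.Reaches B C v :=
  let ⟨s, p, hp, _⟩ := hv
  ⟨s, p, hp⟩

theorem Reaches.ascends (hv : G.Reaches B C v) (hvC : v ∉ C) (hvS : v ∈ G.ancestralClosure C) :
    G.Ascends B C v := by
  obtain ⟨s, p, hp⟩ := hv
  exact ⟨s, p, hp, by cases s <;> assumption⟩

theorem IsDAG.reaches_of_arrow (hG : G.IsDAG) (hv : G.Reaches B C v) (hvC : v ∉ C)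
    (hvw : G.arrow v w) :
    G.Reaches B C w ∧ (w ∈ G.ancestralClosure C → G.Ascends B C w) := by
  suffices ∃ s p, G.Trail B C w s p ∧ (w ∈ G.ancestralClosure C → G.Ascendable C w s) from
    let ⟨s, p, hp, hs⟩ := this
    ⟨⟨s, p, hp⟩, fun hw => ⟨s, p, hp, hs hw⟩⟩
  obtain ⟨s, p, hp⟩ := hv
  by_cases hw : w ∈ v :: p
  · rcases List.mem_cons.1 hw with rfl | hw
    · exact (hG.not_arrow_self hvw).elim
    · obtain ⟨s', q, hq, hs' | ⟨-, -, hwv⟩⟩ := hp.exists_trail_of_mem hw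
      · exact ⟨s', q, hq, fun _ => hs'⟩
      · exact (hG.2 w (hwv.tail hvw)).elim
  · exact ⟨true, v :: p, hp.down hvC hvw hw, id⟩

theorem IsDAG.ascends_of_arrow (hG : G.IsDAG) (hv : G.Ascends B C v) (hwv : G.arrow w v)
    (hwC : w ∉ C) : G.Ascends B C w := by
  obtain ⟨s, p, hp, hs⟩ := hv
  by_cases hw : w ∈ v :: p
  · rcases List.mem_cons.1 hw with rfl | hw
    · exact (hG.not_arrow_self hwv).elim
    · obtain ⟨s', q, hq, hs' | ⟨-, rfl, -⟩⟩ := hp.exists_trail_of_mem hw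
      · exact ⟨s', q, hq, hs'⟩
      · exact Reaches.ascends ⟨s', q, hq⟩ hwC (mem_ancestralClosure_of_arrow hwv hs)
  · exact ⟨false, v :: p, hp.up hs hwv hw, hwC⟩

theorem IsDAG.reaches_of_reflTransGen (hG : G.IsDAG) (hv : G.Reaches B C v)
    (hvS : v ∉ G.ancestralClosure C) (hvw : Relation.ReflTransGen G.arrow v w) :
    G.Reaches B C w := by
  induction hvw with
  | refl => exact hv
  | tail hvx hxy ih =>
    refine (hG.reaches_of_arrow ih (fun hx => hvS ?_) hxy).1
    exact mem_ancestralClosure_of_reflTransGen hvx (subset_ancestralClosure hx)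

theorem IsDAG.ascends_of_reflTransGen (hG : G.IsDAG) (hvS : v ∉ G.ancestralClosure C) (hb : b ∈ B)
    (hvb : Relation.ReflTransGen G.arrow v b) : G.Ascends B C v := by
  have hvC : v ∉ C := fun hv => hvS (subset_ancestralClosure hv)
  induction hvb using Relation.ReflTransGen.head_induction_on with
  | refl => exact ⟨false, [], .start hb, hvC⟩
  | head hvx _ ih =>
    have hxS := fun hx => hvS (mem_ancestralClosure_of_arrow hvx hx)
    exact hG.ascends_of_arrow (ih hxS fun hx => hxS (subset_ancestralClosure hx)) hvx hvC

theorem IsDAG.ascends_or_reaches (hG : G.IsDAG) (hvS : v ∈ G.ancestralClosure (A ∪ B ∪ C))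
    (hv : G.Reaches B C v) (hvC : v ∈ G.ancestralClosure C → G.Ascends B C v) :
    G.Ascends B C v ∨ ∃ a ∈ A, G.Reaches B C a := by
  by_cases hvS' : v ∈ G.ancestralClosure C
  · exact .inl (hvC hvS')
  · obtain ⟨d, (hd | hd) | hd, hvd⟩ := hvS
    · exact .inr ⟨d, hd, hG.reaches_of_reflTransGen hv hvS' hvd⟩
    · exact .inl (hG.ascends_of_reflTransGen hvS' hd hvd)
    · exact (hvS' ⟨d, hd, hvd⟩).elim

end Trail

section MoralGraph

/-- The moral graph of the ancestral closure of `D` with the nodes of `C` deleted. Two nodes are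
joined if they are adjacent in `G` or have a common child in the ancestral closure of `D`. -/
def moralGraph (G : MixedGraph V) (D C : Set V) : SimpleGraph V where
  Adj v w := v ≠ w ∧ v ∈ G.ancestralClosure D \ C ∧ w ∈ G.ancestralClosure D \ C ∧
    (G.arrow v w ∨ G.arrow w v ∨ ∃ t ∈ G.ancestralClosure D, G.arrow v t ∧ G.arrow w t)
  symm := ⟨by grind⟩
  loopless := ⟨fun _ h => h.1 rfl⟩

theorem IsDAG.moralGraph_adj_of_arrow (hG : G.IsDAG) (hvw : G.arrow v w)
    (hw : w ∈ G.ancestralClosure D \ C) (hvC : v ∉ C) : (G.moralGraph D C).Adj v w :=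
  ⟨fun h => hG.not_arrow_self (h ▸ hvw), ⟨mem_ancestralClosure_of_arrow hvw hw.1, hvC⟩, hw,
    .inl hvw⟩

theorem IsDAG.reaches_of_moralGraph_adj (hG : G.IsDAG) (hv : G.Reaches B C v)
    (hvw : (G.moralGraph (A ∪ B ∪ C) C).Adj v w) :
    G.Reaches B C w ∨ ∃ a ∈ A, G.Reaches B C a := by
  obtain ⟨-, ⟨hvS, hvC⟩, ⟨-, hwC⟩, hvw | hwv | ⟨t, htS, hvt, hwt⟩⟩ := hvw
  · exact .inl (hG.reaches_of_arrow hv hvC hvw).1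
  · exact (hG.ascends_or_reaches hvS hv (hv.ascends hvC)).imp_left fun hv' =>
      (hG.ascends_of_arrow hv' hwv hwC).reaches
  · obtain ⟨ht, htC⟩ := hG.reaches_of_arrow hv hvC hvt
    exact (hG.ascends_or_reaches htS ht htC).imp_left fun ht' =>
      (hG.ascends_of_arrow ht' hwt hwC).reaches

theorem IsDAG.reaches_of_moralGraph_reachable (hG : G.IsDAG) (hb : b ∈ B)
    (hbv : (G.moralGraph (A ∪ B ∪ C) C).Reachable b v) :
    G.Reaches B C v ∨ ∃ a ∈ A, G.Reaches B C a := by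
  rw [SimpleGraph.reachable_iff_reflTransGen] at hbv
  induction hbv with
  | refl => exact .inl ⟨false, [], .start hb⟩
  | tail _ hvw ih => exact ih.elim (hG.reaches_of_moralGraph_adj · hvw) .inr

theorem Trail.mem_ancestralClosure {p : List V} (hp : G.Trail B C v false p) (hBD : B ⊆ D)
    (hCD : C ⊆ D) : v ∈ G.ancestralClosure D := by
  generalize hs : false = s at hp
  induction hp with
  | start hb => exact subset_ancestralClosure (hBD hb)
  | down => simp at hs
  | @up _ _ s _ _ hv hwv _ ih =>
    refine mem_ancestralClosure_of_arrow hwv ?_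
    cases s with
    | false => exact ih rfl
    | true => exact ancestralClosure_mono hCD hv

theorem IsDAG.exists_moralGraph_reachable_of_trail (hG : G.IsDAG) {s : Bool} {p : List V}
    (hp : G.Trail B C v s p) (hBD : B ⊆ D) (hCD : C ⊆ D) (hv : v ∈ G.ancestralClosure D) :
    ∃ b ∈ B, (v ∉ C → (G.moralGraph D C).Reachable b v) ∧
      (s = true → ∀ w, G.arrow w v → w ∉ C → (G.moralGraph D C).Reachable b w) := by
  induction hp with
  | start hb => exact ⟨_, hb, fun _ => .rfl, by simp⟩
  | @down v w _ _ _ hvC hvw _ ih =>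
    have hvS := mem_ancestralClosure_of_arrow hvw hv
    obtain ⟨b, hb, hbv, -⟩ := ih hvS
    refine ⟨b, hb, fun hwC => (hbv hvC).trans
      (hG.moralGraph_adj_of_arrow hvw ⟨hv, hwC⟩ hvC).reachable, fun _ x hxw hxC => ?_⟩
    obtain rfl | hvx := eq_or_ne v x
    · exact hbv hvC
    · have hxS := mem_ancestralClosure_of_arrow hxw hv
      exact (hbv hvC).trans
        (SimpleGraph.Adj.reachable ⟨hvx, ⟨hvS, hvC⟩, ⟨hxS, hxC⟩, .inr (.inr ⟨w, hv, hvw, hxw⟩)⟩)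
  | @up v w s p hp hvs hwv _ ih =>
    cases s with
    | false =>
      have hvS := hp.mem_ancestralClosure hBD hCD
      obtain ⟨b, hb, hbv, -⟩ := ih hvS
      exact ⟨b, hb, fun hwC => (hbv hvs).trans
        (hG.moralGraph_adj_of_arrow hwv ⟨hvS, hvs⟩ hwC).symm.reachable, by simp⟩
    | true =>
      obtain ⟨b, hb, -, hbw⟩ := ih (ancestralClosure_mono hCD hvs)
      exact ⟨b, hb, hbw rfl w hwv, by simp⟩

theorem IsDAG.mSep_iff_not_moralGraph_reachable (hG : G.IsDAG) (hAC : Disjoint A C)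
    (hBC : Disjoint B C) :
    G.mSep A B C ↔ ∀ a ∈ A, ∀ b ∈ B, ¬ (G.moralGraph (A ∪ B ∪ C) C).Reachable b a := by
  have hreaches : (∃ a ∈ A, G.Reaches B C a) → ¬ G.mSep A B C := by
    rintro ⟨a, ha, s, p, hp⟩ hsep
    exact hsep ⟨a :: p, hG.connecting_of_trail hp, ⟨a, ha, rfl⟩, hp.exists_getLast?⟩
  constructor
  · intro hsep a ha b hb hba
    rcases hG.reaches_of_moralGraph_reachable hb hba with h | h
    exacts [hreaches ⟨a, ha, h⟩ hsep, hreaches h hsep]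
  · rintro hsep ⟨_ | ⟨x, p⟩, hp, ⟨a, ha, hxa⟩, ⟨b, hb, hlast⟩⟩
    · simp at hxa
    obtain rfl : x = a := by simpa using hxa
    obtain ⟨s, htrail⟩ := hG.exists_trail_of_connecting hBC hb hp hlast
    obtain ⟨b', hb', hreach, -⟩ := hG.exists_moralGraph_reachable_of_trail htrail
      (D := A ∪ B ∪ C) (by grind) (by grind) (subset_ancestralClosure (by grind))
    exact hsep x ha b' hb' (hreach (hAC.notMem_of_mem_left ha))

end MoralGraph

section SamePattern

/-- Two graphs have the same pattern if they have the same skeleton and the same unshielded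
colliders `i → k ← j`. -/
structure SamePattern (G H : MixedGraph V) : Prop where
  adj_iff (i j : V) : G.adj i j ↔ H.adj i j
  collider_iff {i j : V} (k : V) (hij : i ≠ j) (hadj : ¬ G.adj i j) :
    G.arrow i k ∧ G.arrow j k ↔ H.arrow i k ∧ H.arrow j k

theorem SamePattern.symm (h : G.SamePattern H) : H.SamePattern G :=
  ⟨fun i j => (h.adj_iff i j).symm,
    fun k hij hadj => (h.collider_iff k hij (mt (h.adj_iff _ _).1 hadj)).symm⟩

theorem SamePattern.arrow_of_not_adj (h : G.SamePattern H) (hG : G.IsDAG) (hH : H.IsDAG)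
    (huv : G.arrow u v) (huv' : H.arrow u v) (hvw : G.arrow v w) (huw : ¬ G.adj u w) :
    H.arrow v w := by
  refine (hH.adj_iff.1 ((h.adj_iff v w).1 (.inl hvw))).resolve_right fun hwv => ?_
  have huw' : u ≠ w := fun h => hG.not_arrow_symm huv (h ▸ hvw)
  exact hG.not_arrow_symm hvw ((h.collider_iff v huw' huw).2 ⟨huv', hwv⟩).2

/-- `G.LeadsTo D n v` says that some directed walk with `n` edges leads from `v` to `D`. -/
inductive LeadsTo (G : MixedGraph V) (D : Set V) : ℕ → V → Prop
  | zero {v : V} (hv : v ∈ D) : LeadsTo G D 0 v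
  | succ {v w : V} {n : ℕ} (hvw : G.arrow v w) (hw : LeadsTo G D n w) : LeadsTo G D (n + 1) v

theorem exists_leadsTo_of_mem_ancestralClosure (hv : v ∈ G.ancestralClosure D) :
    ∃ n, G.LeadsTo D n v := by
  obtain ⟨d, hd, hvd⟩ := hv
  induction hvd using Relation.ReflTransGen.head_induction_on with
  | refl => exact ⟨0, .zero hd⟩
  | head hvw _ ih =>
    obtain ⟨n, hn⟩ := ih
    exact ⟨n + 1, .succ hvw hn⟩

/-- The directed path from `s` through `t` to `D` is shortest, hence has no chord, so each of its
edges has in `H` the direction it has in `G`. -/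
theorem SamePattern.mem_ancestralClosure_of_leadsTo (h : G.SamePattern H) (hG : G.IsDAG)
    (hH : H.IsDAG) {n : ℕ} {s t : V} (hst : G.arrow s t) (hst' : H.arrow s t)
    (ht : G.LeadsTo D n t) (hs : ∀ m ≤ n, ¬ G.LeadsTo D m s) : t ∈ H.ancestralClosure D := by
  induction ht generalizing s with
  | zero ht => exact subset_ancestralClosure ht
  | @succ t t₁ n htt₁ ht₁ ih =>
    have hst₁ : ¬ G.adj s t₁ := by
      intro hadj
      rcases hG.adj_iff.1 hadj with hst₁ | ht₁s
      · exact hs _ le_rfl (.succ hst₁ ht₁)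
      · exact hG.2 s (((Relation.TransGen.single hst).tail htt₁).tail ht₁s)
    have htt₁' := h.arrow_of_not_adj hG hH hst hst' htt₁ hst₁
    exact mem_ancestralClosure_of_arrow htt₁'
      (ih htt₁ htt₁' fun m hm htm => hs (m + 1) (by omega) (.succ hst htm))

theorem SamePattern.exists_common_child (h : G.SamePattern H) (hG : G.IsDAG) (hH : H.IsDAG)
    (hvw : v ≠ w) (hadj : ¬ G.adj v w)
    (hchild : ∃ t ∈ G.ancestralClosure D, G.arrow v t ∧ G.arrow w t) :
    ∃ t ∈ H.ancestralClosure D, H.arrow v t ∧ H.arrow w t := by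
  classical
  have hex : ∃ n t, G.LeadsTo D n t ∧ G.arrow v t ∧ G.arrow w t :=
    let ⟨t, ht, hvwt⟩ := hchild
    let ⟨n, hn⟩ := exists_leadsTo_of_mem_ancestralClosure ht
    ⟨n, t, hn, hvwt⟩
  obtain ⟨t, ht, hvt, hwt⟩ := Nat.find_spec hex
  have hmin : ∀ m < Nat.find hex, ∀ t, G.LeadsTo D m t → G.arrow v t → ¬ G.arrow w t :=
    fun m hm t ht hvt hwt => Nat.find_min hex hm ⟨t, ht, hvt, hwt⟩
  generalize Nat.find hex = n at ht hmin
  obtain ⟨hvt', hwt'⟩ := (h.collider_iff t hvw hadj).1 ⟨hvt, hwt⟩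
  refine ⟨t, ?_, hvt', hwt'⟩
  cases ht with
  | zero ht => exact subset_ancestralClosure ht
  | @succ _ t₁ n htt₁ ht₁ =>
    have arrow_of_adj {x : V} (hxt : G.arrow x t) (hx : G.adj x t₁) : G.arrow x t₁ :=
      (hG.adj_iff.1 hx).resolve_right fun ht₁x =>
        hG.2 x (((Relation.TransGen.single hxt).tail htt₁).tail ht₁x)
    -- Otherwise `t₁` would be a common child of `v` and `w` nearer to `D` than `t`.
    have hnadj : ¬ G.adj v t₁ ∨ ¬ G.adj w t₁ := by
      by_contra! hadj
      exact hmin n n.lt_succ_self t₁ ht₁ (arrow_of_adj hvt hadj.1) (arrow_of_adj hwt hadj.2)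
    have htt₁' : H.arrow t t₁ := hnadj.elim (h.arrow_of_not_adj hG hH hvt hvt' htt₁)
      (h.arrow_of_not_adj hG hH hwt hwt' htt₁)
    exact mem_ancestralClosure_of_arrow htt₁' (h.mem_ancestralClosure_of_leadsTo hG hH htt₁ htt₁'
      ht₁ fun m hm htm => hmin m (by omega) t htm hvt hwt)

theorem SamePattern.mem_ancestralClosure_of_moralGraph [Finite V] (h : G.SamePattern H)
    (hG : G.IsDAG) (hH : H.IsDAG) {S : Set V}
    (hS : ∀ v ∈ S, v ∈ D ∨ ∃ u ∈ S, ∃ w ∈ S, (G.moralGraph D C).Adj u v ∧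
      (G.moralGraph D C).Adj v w ∧ u ≠ w ∧ ¬ (G.moralGraph D C).Adj u w) (hv : v ∈ S) :
    v ∈ H.ancestralClosure D := by
  induction v using hH.wellFounded_minLt.induction with
  | _ v ih =>
    have of_arrow {x : V} (hx : x ∈ S) (hvx : H.arrow v x) : v ∈ H.ancestralClosure D :=
      mem_ancestralClosure_of_arrow hvx (ih x (.single hvx) hx)
    have of_not_adj {x : V} (hvx : (G.moralGraph D C).Adj v x) (hn : ¬ G.adj v x) :
        v ∈ H.ancestralClosure D := by
      obtain ⟨hne, -, -, hvx | hxv | hchild⟩ := hvx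
      · exact (hn (.inl hvx)).elim
      · exact (hn (.inr (.inl hxv))).elim
      · obtain ⟨t, ht, hvt, -⟩ := h.exists_common_child hG hH hne hn hchild
        exact mem_ancestralClosure_of_arrow hvt ht
    obtain hvD | ⟨u, hu, w, hw, huv, hvw, huw, hchord⟩ := hS v hv
    · exact subset_ancestralClosure hvD
    by_cases hvu' : G.adj v u
    · by_cases hvw' : G.adj v w
      · have huw' : ¬ G.adj u w := fun hadj =>
          hchord ⟨huw, huv.2.1, hvw.2.2.1, (hG.adj_iff.1 hadj).imp_right .inl⟩
        have hcol : ¬ (H.arrow u v ∧ H.arrow w v) := fun hcol =>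
          hchord ⟨huw, huv.2.1, hvw.2.2.1,
            .inr (.inr ⟨v, hvw.2.1.1, (h.collider_iff v huw huw').2 hcol⟩)⟩
        rcases hH.adj_iff.1 ((h.adj_iff v u).1 hvu') with hvu | huv
        · exact of_arrow hu hvu
        · exact of_arrow hw ((hH.adj_iff.1 ((h.adj_iff v w).1 hvw')).resolve_right (hcol ⟨huv, ·⟩))
      · exact of_not_adj hvw hvw'
    · exact of_not_adj huv.symm hvu'

theorem SamePattern.moralGraph_adj (h : G.SamePattern H) (hG : G.IsDAG) (hH : H.IsDAG)
    (hvw : (G.moralGraph D C).Adj v w) (hv : v ∈ H.ancestralClosure D)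
    (hw : w ∈ H.ancestralClosure D) : (H.moralGraph D C).Adj v w := by
  obtain ⟨hne, ⟨-, hvC⟩, ⟨-, hwC⟩, hvw⟩ := hvw
  refine ⟨hne, ⟨hv, hvC⟩, ⟨hw, hwC⟩, ?_⟩
  by_cases hadj : G.adj v w
  · exact (hH.adj_iff.1 ((h.adj_iff v w).1 hadj)).imp_right .inl
  · rw [hG.adj_iff, not_or] at hadj
    exact .inr (.inr (h.exists_common_child hG hH hne (hG.adj_iff.not.2 (not_or.2 hadj))
      ((hvw.resolve_left hadj.1).resolve_left hadj.2)))

theorem SamePattern.moralGraph_reachable [Finite V] (h : G.SamePattern H) (hG : G.IsDAG)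
    (hH : H.IsDAG) (ha : a ∈ D) (hb : b ∈ D) (hab : (G.moralGraph D C).Reachable a b) :
    (H.moralGraph D C).Reachable a b := by
  obtain ⟨p, hp⟩ := exists_walk_forall_mem_support_exists_not_adj hab
  have hpS : ∀ v ∈ p.support, v ∈ H.ancestralClosure D := fun v hv =>
    h.mem_ancestralClosure_of_moralGraph (C := C) hG hH (S := {v | v ∈ p.support})
      (fun v hv => by rcases hp v hv with rfl | rfl | hv; exacts [.inl ha, .inl hb, .inr hv]) hv
  refine (p.transfer (H.moralGraph D C) fun e he => ?_).reachable
  induction e with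
  | _ v w =>
    exact h.moralGraph_adj hG hH (p.adj_of_mem_edges he)
      (hpS v (p.fst_mem_support_of_mem_edges he)) (hpS w (p.snd_mem_support_of_mem_edges he))

theorem SamePattern.markovEquiv [Finite V] (h : G.SamePattern H) (hG : G.IsDAG) (hH : H.IsDAG) :
    G.MarkovEquiv H := by
  intro A B C _ hAC hBC
  rw [hG.mSep_iff_not_moralGraph_reachable hAC hBC, hH.mSep_iff_not_moralGraph_reachable hAC hBC]
  refine forall₄_congr fun a ha b hb => not_congr ?_
  have ha : a ∈ A ∪ B ∪ C := .inl (.inl ha)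
  have hb : b ∈ A ∪ B ∪ C := .inl (.inr hb)
  exact ⟨h.moralGraph_reachable hG hH hb ha, h.symm.moralGraph_reachable hH hG hb ha⟩

end SamePattern

end MixedGraph

section Stability

variable {V : Type} [Finite V] {ci : V → V → Set V → Prop} {lt : V → V → Prop}
  {G : MixedGraph V} {i j k : V} {C S : Set V}

theorem UpStab.ci_union (hup : UpStab lt ci) (hij : i ≠ j) (hi : i ∉ C) (hj : j ∉ C)
    (hC : ci i j C) (hS : ∀ k ∈ S, k ≠ i ∧ k ≠ j ∧ (lt i k ∨ lt j k)) : ci i j (C ∪ S) := by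
  induction S, S.toFinite using Set.Finite.induction_on with
  | empty => simpa using hC
  | @insert k S _ _ ih =>
    have hS' : ∀ l ∈ S, l ≠ i ∧ l ≠ j ∧ (lt i l ∨ lt j l) := fun l hl => hS l (.inr hl)
    obtain ⟨hki, hkj, hk⟩ := hS k (.inl rfl)
    rw [Set.insert_eq, Set.union_comm {k}, ← Set.union_assoc]
    exact hup i j (C ∪ S) hij (fun h => h.elim hi fun h => (hS' i h).1 rfl)
      (fun h => h.elim hj fun h => (hS' j h).2.1 rfl) (ih hS') k hki hkj hk

theorem DownStab.ci_of_subset (hdown : DownStab lt ci) (hwf : WellFounded lt) (hij : i ≠ j)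
    (hi : i ∉ C) (hj : j ∉ C) (hC : ci i j C) (hSC : S ⊆ C)
    (hS : ∀ k ∈ C \ S, ¬ lt i k ∧ ¬ lt j k ∧ ∀ l ∈ S, ¬ lt l k) : ci i j S := by
  induction C using WellFoundedLT.induction with
  | _ C ih =>
    obtain rfl | hne := hSC.eq_or_ssubset
    · exact hC
    obtain ⟨k, hk, hmin⟩ := hwf.has_min (C \ S) (Set.nonempty_of_ssubset hne)
    have hsub : C \ {k} ⊆ C := Set.sdiff_subset
    obtain ⟨hik, hjk, hSk⟩ := hS k hk
    have hlk : ∀ l ∈ C \ {k}, ¬ lt l k := fun l hl =>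
      (em (l ∈ S)).elim (hSk l) fun hlS => hmin l ⟨hl.1, hlS⟩
    exact ih (C \ {k}) (Set.sdiff_singleton_ssubset.2 hk.1) (fun h => hi (hsub h))
      (fun h => hj (hsub h)) (hdown i j C hij hi hj hC k hik hjk hlk)
      (Set.subset_sdiff_singleton hSC hk.2) fun l hl => hS l ⟨hsub hl.1, hl.2⟩

theorem MixedGraph.IsDAG.ci_anSet (hG : G.IsDAG) (hup : UpStab G.minLt ci)
    (hdown : DownStab G.minLt ci) (hij : i ≠ j) (hi : i ∉ C) (hj : j ∉ C) (hC : ci i j C) :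
    ci i j (G.anSet i j) := by
  have hC' : ci i j (C ∪ G.anSet i j) :=
    hup.ci_union hij hi hj hC fun _ ⟨hk, hki, hkj⟩ => ⟨hki, hkj, hk⟩
  refine hdown.ci_of_subset hG.wellFounded_minLt hij (fun h => h.elim hi (·.2.1 rfl))
    (fun h => h.elim hj (·.2.2 rfl)) hC' Set.subset_union_right fun k ⟨hkC, hk⟩ => ?_
  have hkC : k ∈ C := hkC.resolve_right hk
  have hkij : ¬ (G.anc k i ∨ G.anc k j) := fun h =>
    hk ⟨h, ne_of_mem_of_not_mem hkC hi, ne_of_mem_of_not_mem hkC hj⟩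
  exact ⟨fun h => hkij (.inl h), fun h => hkij (.inr h),
    fun l hl hkl => hkij (hl.1.imp hkl.trans hkl.trans)⟩

theorem MixedGraph.IsDAG.adj_iff_skP (hG : G.IsDAG) (hmax : G.Maximal)
    (hmark : ∀ i j C, i ≠ j → i ∉ C → j ∉ C → G.mSep {i} {j} C → ci i j C)
    (hconv : ∀ i j, i ≠ j → ci i j (G.anSet i j) → ¬ G.adj i j)
    (hup : UpStab G.minLt ci) (hdown : DownStab G.minLt ci) (i j : V) :
    G.adj i j ↔ skP ci i j := by
  constructor
  · intro hadj
    have hij : i ≠ j := by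
      rintro rfl
      simp [hG.adj_iff, hG.not_arrow_self] at hadj
    exact ⟨hij, fun ⟨C, hi, hj, hC⟩ =>
      hconv i j hij (hG.ci_anSet hup hdown hij hi hj hC) hadj⟩
  · rintro ⟨hij, hsep⟩
    by_contra hadj
    obtain ⟨C, hi, hj, hC⟩ := hmax i j hij hadj
    exact hsep ⟨C, hi, hj, hmark i j C hij hi hj hC⟩

theorem VStable.collider_iff (hvs : VStable ci) (hG : G.IsDAG)
    (hskel : ∀ i j, G.adj i j ↔ skP ci i j) (hup : UpStab G.minLt ci)
    (hdown : DownStab G.minLt ci) (hij : i ≠ j) (hadj : ¬ skP ci i j) :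
    G.arrow i k ∧ G.arrow j k ↔
      skP ci i k ∧ skP ci k j ∧ ∃ C, i ∉ C ∧ j ∉ C ∧ k ∉ C ∧ ci i j C := by
  constructor
  · rintro ⟨hik, hjk⟩
    refine ⟨(hskel i k).1 (.inl hik), (hskel k j).1 (.inr (.inl hjk)), G.anSet i j,
      (·.2.1 rfl), (·.2.2 rfl), ?_, ?_⟩
    · rintro ⟨hki | hkj, -⟩
      exacts [hG.2 k (hki.tail hik), hG.2 k (hkj.tail hjk)]
    · simp only [skP, hij, ne_eq, not_false_eq_true, true_and, not_not] at hadj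
      obtain ⟨C, hi, hj, hC⟩ := hadj
      exact hG.ci_anSet hup hdown hij hi hj hC
  · rintro ⟨hik, hkj, C, hi, hj, hk, hC⟩
    by_contra hcol
    have hanc : G.anc k i ∨ G.anc k j := by
      have hik' := hG.adj_iff.1 ((hskel i k).2 hik)
      have hkj' := hG.adj_iff.1 ((hskel k j).2 hkj)
      have : G.arrow k i ∨ G.arrow k j := by tauto
      exact this.imp .single .single
    exact hvs ⟨i, k, j, C, hij, hik.1, hkj.1.symm, hik, hkj, hadj, hi, hj, hk, hC,
      hup i j C hij hi hj hC k hik.1.symm hkj.1 hanc⟩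

theorem VStable.dagUniquenessProp (hvs : VStable ci) : DAGUniquenessProp ci := by
  intro G H hG hGskel hGup hGdown hH hHskel hHup hHdown
  refine MixedGraph.SamePattern.markovEquiv ⟨fun i j => by rw [hGskel, hHskel], ?_⟩ hG hH
  intro i j k hij hadj
  rw [hGskel] at hadj
  rw [hvs.collider_iff hG hGskel hGup hGdown hij hadj,
    hvs.collider_iff hH hHskel hHup hHdown hij hadj]

end Stability

theorem statement_12_general {V : Type} [Finite V] {ci : V → V → Set V → Prop}
    {G : MixedGraph V} (hdag : G.IsDAG) (hmax : G.Maximal)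
    (hmark : ∀ i j C, i ≠ j → i ∉ C → j ∉ C → G.mSep {i} {j} C → ci i j C)
    (hconv : ∀ i j, i ≠ j → ci i j (G.anSet i j) → ¬ G.adj i j)
    (hup : UpStab G.minLt ci) (hdown : DownStab G.minLt ci) (hvs : VStable ci) :
    ∀ H : MixedGraph V, NaturalOutput ci H → H.IsDAG → H.MarkovEquiv G := by
  rintro H ⟨hskel, lt, -, -, -, -, hlt, hupH, hdownH⟩ hH
  obtain rfl : lt = H.minLt := funext₂ fun a b => propext (hlt a b)
  exact hvs.dagUniquenessProp H G hH hskel hupH hdownH hdag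
    (hdag.adj_iff_skP hmax hmark hconv hup hdown) hup hdown

/-- Theorem 18(b) of Sadeghi–Soo. -/
theorem statement_12 {V : Type} [Fintype V]
    {Ω : Type} [MeasurableSpace Ω] [StandardBorelSpace Ω] [Nonempty Ω]
    (μ : Measure Ω) [IsProbabilityMeasure μ]
    {𝓧 : V → Type} [∀ v, MeasurableSpace (𝓧 v)]
    (X : ∀ v, Ω → 𝓧 v) (hX : ∀ v, Measurable (X v))
    (G0 : MixedGraph V) (hdag : G0.IsDAG) (hmax : G0.Maximal)
    (hMark : Markovian μ X hX G0)
    (hconv : ConvPairwiseMarkov μ X hX G0)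
    (hup : UpStab G0.minLt (ciP μ X hX)) (hdown : DownStab G0.minLt (ciP μ X hX))
    (hvs : VStable (ciP μ X hX)) :
    ∀ H : MixedGraph V, NaturalOutput (ciP μ X hX) H → H.IsDAG →
      H.MarkovEquiv G0 := by
  exact statement_12_general hdag hmax
    (fun i j C hij hi hj => hMark {i} {j} C (by simpa) (by simpa) (by simpa)) hconv hup hdown hvs
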